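/- Let n ≥ 2 and let 0 < θ and θ/2 < φ ≤ π/2. Then A(n,θ,φ) ≤ B(n, ω(θ,φ)), where B(n,·) := A(n,·,π/2) is the maximum size of a code in the closed hemisphere Cap(n,π/2). -/

import Mathlib

noncomputable section

/-- The "North pole" `(0, …, 0, 1)` of the unit sphere in `ℝ^n`. -/
def north (n : ℕ) : EuclideanSpace ℝ (Fin n) :=
  if h : 0 < n then EuclideanSpace.single ⟨n - 1, Nat.sub_lt h Nat.one_pos⟩ 1 else 0

/-- Angular distance between two points: `arccos ⟨x, y⟩`. -/
def aDist {n : ℕ} (x y : EuclideanSpace ℝ (Fin n)) : ℝ := Real.arccos (inner ℝ x y : ℝ)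

/-- A finite set of unit vectors with pairwise angular distance at least `θ`. -/
def IsCode {n : ℕ} (θ : ℝ) (C : Finset (EuclideanSpace ℝ (Fin n))) : Prop :=
  (∀ x ∈ C, ‖x‖ = 1) ∧ ∀ x ∈ C, ∀ y ∈ C, x ≠ y → θ ≤ aDist x y

/-- `A(n, θ)`: maximal size of a `θ`-code on the unit sphere `S^{n-1} ⊂ ℝ^n`. -/
def sphereMax (n : ℕ) (θ : ℝ) : ℕ :=
  sSup {M | ∃ C : Finset (EuclideanSpace ℝ (Fin n)), IsCode θ C ∧ C.card = M}

/-- `A(n, θ, φ)`: maximal size of a `θ`-code in the cap of angular radius `φ` about the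
North pole. -/
def capMax (n : ℕ) (θ φ : ℝ) : ℕ :=
  sSup {M | ∃ C : Finset (EuclideanSpace ℝ (Fin n)), IsCode θ C ∧
    (∀ x ∈ C, aDist x (north n) ≤ φ) ∧ C.card = M}

/-- `A(n, θ, [ψ, φ])`: maximal size of a `θ`-code in the strip `Z(n, [ψ, φ])`. -/
def stripMax (n : ℕ) (θ ψ φ : ℝ) : ℕ :=
  sSup {M | ∃ C : Finset (EuclideanSpace ℝ (Fin n)), IsCode θ C ∧
    (∀ x ∈ C, ψ ≤ aDist x (north n) ∧ aDist x (north n) ≤ φ) ∧ C.card = M}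

/-- `m(n, d)`: maximal number of points in the closed unit ball of `ℝ^n` with pairwise
Euclidean distances at least `d`. -/
def ballMax (n : ℕ) (d : ℝ) : ℕ :=
  sSup {M | ∃ C : Finset (EuclideanSpace ℝ (Fin n)), (∀ x ∈ C, ‖x‖ ≤ 1) ∧
    (∀ x ∈ C, ∀ y ∈ C, x ≠ y → d ≤ dist x y) ∧ C.card = M}

/-- `ω(θ, α, β) = arccos((cos θ - cos α cos β) / (sin α sin β))`. -/
def omega2 (θ α β : ℝ) : ℝ :=
  Real.arccos ((Real.cos θ - Real.cos α * Real.cos β) / (Real.sin α * Real.sin β))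

/-- `ω(θ, α) := ω(θ, α, α)`. -/
def omega1 (θ α : ℝ) : ℝ := omega2 θ α α

end

/-!
Seen from the pole `e`, the horizontal part of a point of `Cap(n, φ)` has length at most `sin φ`.
Rescaling horizontal parts by `1 / sin φ` and restoring the vertical coordinate from the sphere
equation therefore carries the cap onto the closed hemisphere. On heights `a = ⟪x, e⟫` this is
`a ↦ √(a² - cos² φ) / sin φ`, so Aczél's inequality
`√(a² - c²) √(b² - c²) ≤ a b - c²` with `c = cos φ` shows that inner products do not exceed
`(⟪x, y⟫ - cos² φ) / sin² φ`: points at angle at least `θ` end up at angle at least `ω(θ, φ)`.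
-/

section CapStretch

open Real
open scoped RealInnerProductSpace

variable {E : Type*} [NormedAddCommGroup E] [InnerProductSpace ℝ E]

/-- The map from the spherical cap of angular radius `φ` about the unit vector `e` to the closed
hemisphere about `e` that multiplies the component orthogonal to `e` by `(sin φ)⁻¹`. The new height
`√(⟪x, e⟫² - cos² φ) / sin φ` is the nonnegative one that keeps a unit vector of the cap on the
sphere. -/
noncomputable def capStretch (e : E) (φ : ℝ) (x : E) : E :=
  (sin φ)⁻¹ • (x + (√(⟪x, e⟫ ^ 2 - cos φ ^ 2) - ⟪x, e⟫) • e)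

variable {e x y : E} {φ : ℝ}

theorem inner_capStretch_pole (he : ‖e‖ = 1) :
    ⟪capStretch e φ x, e⟫ = √(⟪x, e⟫ ^ 2 - cos φ ^ 2) / sin φ := by
  simp only [capStretch, real_inner_smul_left, inner_add_left, real_inner_self_eq_norm_sq, he]
  ring

theorem inner_capStretch_capStretch (he : ‖e‖ = 1) :
    ⟪capStretch e φ x, capStretch e φ y⟫ =
      (⟪x, y⟫ - ⟪x, e⟫ * ⟪y, e⟫ +
        √(⟪x, e⟫ ^ 2 - cos φ ^ 2) * √(⟪y, e⟫ ^ 2 - cos φ ^ 2)) / (sin φ * sin φ) := by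
  simp only [capStretch, real_inner_smul_left, real_inner_smul_right, inner_add_left,
    inner_add_right, real_inner_self_eq_norm_sq, he, real_inner_comm y e]
  ring

theorem norm_capStretch (he : ‖e‖ = 1) (hφ : sin φ ≠ 0) (hx : ‖x‖ = 1)
    (hxe : cos φ ^ 2 ≤ ⟪x, e⟫ ^ 2) : ‖capStretch e φ x‖ = 1 := by
  have hinner : ⟪capStretch e φ x, capStretch e φ x⟫ = 1 := by
    rw [inner_capStretch_capStretch he, mul_self_sqrt (sub_nonneg.2 hxe),
      real_inner_self_eq_norm_sq, hx, div_eq_one_iff_eq (mul_ne_zero hφ hφ)]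
    linear_combination -sin_sq_add_cos_sq φ
  rw [real_inner_self_eq_norm_sq] at hinner
  exact (pow_eq_one_iff_of_nonneg (norm_nonneg _) two_ne_zero).1 hinner

theorem sqrt_sq_sub_sq_mul_sqrt_sq_sub_sq_le {a b c d : ℝ} (hca : |c| ≤ a) (hdb : |d| ≤ b) :
    √(a ^ 2 - c ^ 2) * √(b ^ 2 - d ^ 2) ≤ a * b - c * d := by
  have hac : 0 ≤ a ^ 2 - c ^ 2 := sub_nonneg.2 (sq_le_sq.2 (hca.trans (le_abs_self a)))
  have hcd : c * d ≤ a * b := calc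
    c * d ≤ |c| * |d| := (le_abs_self _).trans_eq (abs_mul c d)
    _ ≤ a * b := mul_le_mul hca hdb (abs_nonneg d) ((abs_nonneg c).trans hca)
  rw [← sqrt_mul hac, sqrt_le_left (sub_nonneg.2 hcd)]
  linarith [sq_nonneg (a * d - b * c)]

theorem inner_capStretch_capStretch_le (he : ‖e‖ = 1) (hφ : 0 ≤ cos φ) (hxe : cos φ ≤ ⟪x, e⟫)
    (hye : cos φ ≤ ⟪y, e⟫) :
    ⟪capStretch e φ x, capStretch e φ y⟫ ≤ (⟪x, y⟫ - cos φ * cos φ) / (sin φ * sin φ) := by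
  rw [inner_capStretch_capStretch he]
  refine div_le_div_of_nonneg_right ?_ (mul_self_nonneg (sin φ))
  have hc : |cos φ| = cos φ := abs_of_nonneg hφ
  linarith [sqrt_sq_sub_sq_mul_sqrt_sq_sub_sq_le (hc.trans_le hxe) (hc.trans_le hye)]

end CapStretch

section AngularDistance

open Real

variable {n : ℕ} {x y : EuclideanSpace ℝ (Fin n)} {θ : ℝ}

theorem aDist_nonneg (x y : EuclideanSpace ℝ (Fin n)) : 0 ≤ aDist x y := arccos_nonneg _

theorem aDist_le_pi (x y : EuclideanSpace ℝ (Fin n)) : aDist x y ≤ π := arccos_le_pi _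

theorem aDist_self (hx : ‖x‖ = 1) : aDist x x = 0 := by
  simp [aDist, hx]

theorem cos_aDist (hx : ‖x‖ = 1) (hy : ‖y‖ = 1) : cos (aDist x y) = inner ℝ x y :=
  have hxy := real_inner_mem_Icc_of_norm_eq_one hx hy
  cos_arccos hxy.1 hxy.2

theorem cos_le_inner_of_aDist_le (hx : ‖x‖ = 1) (hy : ‖y‖ = 1) (hθ : θ ≤ π)
    (h : aDist x y ≤ θ) : cos θ ≤ inner ℝ x y :=
  cos_aDist hx hy ▸ cos_le_cos_of_nonneg_of_le_pi (aDist_nonneg x y) hθ h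

theorem inner_le_cos_of_le_aDist (hx : ‖x‖ = 1) (hy : ‖y‖ = 1) (hθ : 0 ≤ θ)
    (h : θ ≤ aDist x y) : inner ℝ x y ≤ cos θ :=
  cos_aDist hx hy ▸ cos_le_cos_of_nonneg_of_le_pi hθ (aDist_le_pi x y) h

theorem dist_eq_two_mul_sin_aDist_div_two (hx : ‖x‖ = 1) (hy : ‖y‖ = 1) :
    dist x y = 2 * sin (aDist x y / 2) := by
  have hsin : 0 ≤ sin (aDist x y / 2) :=
    sin_nonneg_of_nonneg_of_le_pi (by linarith [aDist_nonneg x y])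
      (by linarith [aDist_le_pi x y, pi_pos])
  rw [← sq_eq_sq₀ dist_nonneg (by positivity), dist_eq_norm, norm_sub_sq_real, hx, hy,
    ← cos_aDist hx hy, mul_pow, sin_sq_eq_half_sub, mul_div_cancel₀ _ two_ne_zero]
  ring

theorem two_div_pi_mul_aDist_le_dist (hx : ‖x‖ = 1) (hy : ‖y‖ = 1) :
    2 / π * aDist x y ≤ dist x y := by
  have hjordan : 2 / π * (aDist x y / 2) ≤ sin (aDist x y / 2) :=
    mul_le_sin (by linarith [aDist_nonneg x y]) (by linarith [aDist_le_pi x y])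
  rw [dist_eq_two_mul_sin_aDist_div_two hx hy]
  linarith

theorem omega1_pos_iff {φ : ℝ} (hφ : sin φ ≠ 0) : 0 < omega1 θ φ ↔ cos θ < 1 := by
  rw [omega1, omega2, arccos_pos, div_lt_one (mul_self_pos.2 hφ), sub_lt_iff_lt_add,
    ← sq, ← sq, sin_sq_add_cos_sq]

end AngularDistance

section Codes

open Real
open scoped NNReal

theorem packingNumber_ne_top_of_totallyBounded {X : Type*} [PseudoEMetricSpace X] {s : Set X}
    {ε : ℝ≥0} (hε : ε ≠ 0) (hs : TotallyBounded s) : Metric.packingNumber ε s ≠ ⊤ := by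
  obtain ⟨N, -, hNfin, hN⟩ :=
    Metric.exists_finite_isCover_of_totallyBounded (div_ne_zero hε two_ne_zero) hs
  rw [← mul_div_cancel₀ ε two_ne_zero]
  exact ne_top_of_le_ne_top hNfin.encard_lt_top.ne <|
    (Metric.packingNumber_two_mul_le_externalCoveringNumber _ s).trans
      hN.externalCoveringNumber_le_encard

variable {n : ℕ} {θ φ : ℝ} {e : EuclideanSpace ℝ (Fin n)} {C : Finset (EuclideanSpace ℝ (Fin n))}

theorem IsCode.isSeparated (hC : IsCode θ C) (hθ : 0 < θ) :
    Metric.IsSeparated (θ / 2).toNNReal (C : Set (EuclideanSpace ℝ (Fin n))) := by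
  intro x hx y hy hxy
  have hθpi : θ / 2 < 2 / π * θ := by
    rw [div_mul_eq_mul_div, div_lt_div_iff₀ two_pos pi_pos]
    nlinarith [pi_lt_four]
  have hdist : θ / 2 < dist x y := calc
    θ / 2 < 2 / π * θ := hθpi
    _ ≤ 2 / π * aDist x y := by gcongr; exact hC.2 x hx y hy hxy
    _ ≤ dist x y := two_div_pi_mul_aDist_le_dist (hC.1 x hx) (hC.1 y hy)
  rw [edist_dist]
  exact (ENNReal.ofReal_lt_ofReal_iff_of_nonneg (by positivity)).2 hdist

theorem exists_forall_isCode_card_le (n : ℕ) (hθ : 0 < θ) :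
    ∃ N : ℕ, ∀ C : Finset (EuclideanSpace ℝ (Fin n)), IsCode θ C → C.card ≤ N := by
  obtain ⟨N, hN⟩ := ENat.ne_top_iff_exists.1 <| packingNumber_ne_top_of_totallyBounded
    (toNNReal_pos.2 (half_pos hθ)).ne'
    (isCompact_sphere (0 : EuclideanSpace ℝ (Fin n)) 1).totallyBounded
  refine ⟨N, fun C hC ↦ ?_⟩
  have hsphere : (C : Set (EuclideanSpace ℝ (Fin n))) ⊆ Metric.sphere 0 1 :=
    fun x hx ↦ mem_sphere_zero_iff_norm.2 (hC.1 x hx)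
  have hcard := (hC.isSeparated hθ).encard_le_packingNumber hsphere
  rwa [← hN, Set.encard_coe_eq_coe_finsetCard, Nat.cast_le] at hcard

theorem IsCode.card_le_capMax (hC : IsCode θ C) (hθ : 0 < θ)
    (hcap : ∀ x ∈ C, aDist x (north n) ≤ φ) : C.card ≤ capMax n θ φ := by
  obtain ⟨N, hN⟩ := exists_forall_isCode_card_le n hθ
  refine le_csSup ⟨N, ?_⟩ ⟨C, hC, hcap, rfl⟩
  rintro M ⟨D, hD, -, rfl⟩
  exact hN D hD

theorem capMax_le {N : ℕ} (h : ∀ C : Finset (EuclideanSpace ℝ (Fin n)), IsCode θ C →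
    (∀ x ∈ C, aDist x (north n) ≤ φ) → C.card ≤ N) : capMax n θ φ ≤ N := by
  refine csSup_le' ?_
  rintro M ⟨C, hC, hcap, rfl⟩
  exact h C hC hcap

theorem norm_north (hn : 0 < n) : ‖north n‖ = 1 := by
  simp [north, hn]

theorem aDist_capStretch_pole_le (he : ‖e‖ = 1) (hφ : 0 ≤ sin φ) (x : EuclideanSpace ℝ (Fin n)) :
    aDist (capStretch e φ x) e ≤ π / 2 := by
  rw [aDist, arccos_le_pi_div_two, inner_capStretch_pole he]
  positivity

theorem IsCode.omega1_le_aDist_capStretch (hC : IsCode θ C) (hθ : 0 ≤ θ) (he : ‖e‖ = 1)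
    (hφ : 0 ≤ cos φ) (hcap : ∀ x ∈ C, cos φ ≤ inner ℝ x e) :
    ∀ x ∈ C, ∀ y ∈ C, x ≠ y → omega1 θ φ ≤ aDist (capStretch e φ x) (capStretch e φ y) := by
  intro x hx y hy hxy
  refine arccos_le_arccos ?_
  calc inner ℝ (capStretch e φ x) (capStretch e φ y)
      ≤ (inner ℝ x y - cos φ * cos φ) / (sin φ * sin φ) :=
        inner_capStretch_capStretch_le he hφ (hcap x hx) (hcap y hy)
    _ ≤ (cos θ - cos φ * cos φ) / (sin φ * sin φ) := by
        gcongr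
        · exact mul_self_nonneg (sin φ)
        · exact inner_le_cos_of_le_aDist (hC.1 x hx) (hC.1 y hy) hθ (hC.2 x hx y hy hxy)

theorem IsCode.forall_norm_capStretch (hC : IsCode θ C) (he : ‖e‖ = 1) (hcos : 0 ≤ cos φ)
    (hsin : sin φ ≠ 0) (hcap : ∀ x ∈ C, cos φ ≤ inner ℝ x e) :
    ∀ x ∈ C, ‖capStretch e φ x‖ = 1 :=
  fun x hx ↦ norm_capStretch he hsin (hC.1 x hx) (pow_le_pow_left₀ hcos (hcap x hx) 2)

theorem IsCode.injOn_capStretch (hC : IsCode θ C) (hθ : 0 ≤ θ) (hθ' : cos θ < 1) (he : ‖e‖ = 1)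
    (hcos : 0 ≤ cos φ) (hsin : sin φ ≠ 0) (hcap : ∀ x ∈ C, cos φ ≤ inner ℝ x e) :
    Set.InjOn (capStretch e φ) C := by
  intro x hx y hy hxy
  by_contra hne
  have hω := hC.omega1_le_aDist_capStretch hθ he hcos hcap x hx y hy hne
  rw [← hxy, aDist_self (hC.forall_norm_capStretch he hcos hsin hcap x hx)] at hω
  exact hω.not_gt ((omega1_pos_iff hsin).2 hθ')

theorem IsCode.image_capStretch [DecidableEq (EuclideanSpace ℝ (Fin n))] (hC : IsCode θ C)
    (hθ : 0 ≤ θ) (he : ‖e‖ = 1) (hcos : 0 ≤ cos φ) (hsin : sin φ ≠ 0)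
    (hcap : ∀ x ∈ C, cos φ ≤ inner ℝ x e) :
    IsCode (omega1 θ φ) (C.image (capStretch e φ)) := by
  constructor
  · exact Finset.forall_mem_image.2 (hC.forall_norm_capStretch he hcos hsin hcap)
  · simp only [Finset.forall_mem_image]
    exact fun x hx y hy hxy ↦
      hC.omega1_le_aDist_capStretch hθ he hcos hcap x hx y hy (ne_of_apply_ne _ hxy)

end Codes

theorem stmt9 (n : ℕ) (hn : 2 ≤ n) (θ φ : ℝ) (hθ : 0 < θ) (h1 : θ / 2 < φ)
    (h2 : φ ≤ Real.pi / 2) :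
    capMax n θ φ ≤ capMax n (omega1 θ φ) (Real.pi / 2) := by
  classical
  have he : ‖north n‖ = 1 := norm_north (by lia)
  have hsin : 0 < Real.sin φ := Real.sin_pos_of_pos_of_lt_pi (by linarith) (by linarith)
  have hcos : 0 ≤ Real.cos φ := Real.cos_nonneg_of_neg_pi_div_two_le_of_le (by linarith) h2
  have hθ' : Real.cos θ < 1 :=
    Real.cos_zero ▸ Real.cos_lt_cos_of_nonneg_of_le_pi le_rfl (by linarith) hθ
  refine capMax_le fun C hC hcap ↦ ?_
  have hheight : ∀ x ∈ C, Real.cos φ ≤ inner ℝ x (north n) := fun x hx ↦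
    cos_le_inner_of_aDist_le (hC.1 x hx) he (by linarith) (hcap x hx)
  rw [← Finset.card_image_of_injOn (hC.injOn_capStretch hθ.le hθ' he hcos hsin.ne' hheight)]
  exact (hC.image_capStretch hθ.le he hcos hsin.ne' hheight).card_le_capMax
    ((omega1_pos_iff hsin.ne').2 hθ')
    (Finset.forall_mem_image.2 fun x _ ↦ aDist_capStretch_pole_le he hsin.le x)
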